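/- Positivity of the geometric crystal structure (part of Theorem 5.3): each of the following rational functions, regarded as an element of the rational function field ℝ(c, x0,...,x5) (respectively ℝ(x0,...,x5)), can be written as a quotient g/h of two nonzero polynomials all of whose coefficients are nonnegative: each of the six components of e0^c(x), each of the six components of e1^c(x), each of the six components of e2^c(x), and the functions ε0(x), ε1(x), ε2(x), γ0(x), γ1(x), γ2(x). -/

import Mathlib

noncomputable section

/-- the action `e1^c` on `(x0,...,x5)` -/
def e1act (c : ℝ) (x : Fin 6 → ℝ) : Fin 6 → ℝ :=
  let x0 := x 0; let x1 := x 1; let x2 := x 2; let x3 := x 3; let x4 := x 4; let x5 := x 5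
  let A1 := x0/x1 + x0*x2^3/(x1^2*x3) + x0*x2^3*x4^3/(x1^2*x3^2*x5)
  let B1 := c*x0/x1 + x0*x2^3/(x1^2*x3) + x0*x2^3*x4^3/(x1^2*x3^2*x5)
  let B3 := c*x0/x1 + c*x0*x2^3/(x1^2*x3) + x0*x2^3*x4^3/(x1^2*x3^2*x5)
  ![x0, (B1/A1)*x1, x2, (B3/B1)*x3, x4, (c*A1/B3)*x5]

/-- the action `e2^c` on `(x0,...,x5)` -/
def e2act (c : ℝ) (x : Fin 6 → ℝ) : Fin 6 → ℝ :=
  let x0 := x 0; let x1 := x 1; let x2 := x 2; let x3 := x 3; let x4 := x 4; let x5 := x 5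
  let A2 := x1/x2 + x1*x3/(x2^2*x4)
  let B2 := c*x1/x2 + x1*x3/(x2^2*x4)
  ![x0, x1, (B2/A2)*x2, x3, (c*A2/B2)*x4, x5]

end

noncomputable section

/-- the action `e0^c` on `(x0,...,x5)` -/
def e0act (c : ℝ) (x : Fin 6 → ℝ) : Fin 6 → ℝ :=
  let x0 := x 0; let x1 := x 1; let x2 := x 2; let x3 := x 3; let x4 := x 4; let x5 := x 5
  let D := c^2*x0^2*x2^3*x3 + x1*x2^3*x3^2*x5
    + c*x0*(x1*x3^3 + 3*x1*x2*x3^2*x4 + 3*x1*x2^2*x3*x4^2 + x2^3*(x3^2 + x1*x4^3 + x1*x3*x5))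
  let E := x0^2*x2^3*x3 + x1*x2^3*x3^2*x5
    + x0*(x1*x3^3 + 3*x1*x2*x3^2*x4 + 3*x1*x2^2*x3*x4^2 + x2^3*(x3^2 + x1*x4^3 + x1*x3*x5))
  let F := c*x0^2*x2^3*x3 + x1*x2^3*x3^2*x5
    + x0*(c*x1*x3^3 + 3*c*x1*x2*x3^2*x4 + 3*c*x1*x2^2*x3*x4^2
        + x2^3*(x3^2 + c*x1*x4^3 + c*x1*x3*x5))
  let G := c*x0^2*x2^3*x3 + x1*x2^3*x3^2*x5
    + x0*(x1*x3^3 + (2+c)*x1*x2*x3^2*x4 + (1+2*c)*x1*x2^2*x3*x4^2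
        + x2^3*(x3^2 + c*x1*x4^3 + c*x1*x3*x5))
  let H := c*x0^2*x2^3*x3 + x1*x2^3*x3^2*x5
    + x0*(x1*x3^3 + 3*x1*x2*x3^2*x4 + 3*x1*x2^2*x3*x4^2 + x2^3*(x3^2 + x1*x4^3 + c*x1*x3*x5))
  ![D/(c*E)*x0, F/(c*E)*x1, G/(c*E)*x2, D*H/(c^2*E*F)*x3, D/(c*G)*x4, D/(c*H)*x5]

end

noncomputable section

def eps1 (x : Fin 6 → ℝ) : ℝ :=
  x 0/x 1 + x 0*(x 2)^3/((x 1)^2*x 3) + x 0*(x 2)^3*(x 4)^3/((x 1)^2*(x 3)^2*x 5)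

def eps2 (x : Fin 6 → ℝ) : ℝ := x 1/x 2 + x 1*x 3/((x 2)^2*x 4)

def eps0 (x : Fin 6 → ℝ) : ℝ :=
  ((x 0)^2*(x 2)^3*x 3 + x 1*(x 2)^3*(x 3)^2*x 5
      + x 0*(x 1*(x 3)^3 + 3*x 1*x 2*(x 3)^2*x 4 + 3*x 1*(x 2)^2*x 3*(x 4)^2
          + (x 2)^3*((x 3)^2 + x 1*(x 4)^3 + x 1*x 3*x 5)))
    / ((x 0)^3*(x 2)^3*x 3)

def gamma0 (x : Fin 6 → ℝ) : ℝ := (x 0)^2/(x 1*x 3*x 5)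

def gamma1 (x : Fin 6 → ℝ) : ℝ := (x 1)^2*(x 3)^2*(x 5)^2/(x 0*(x 2)^3*(x 4)^3)

def gamma2 (x : Fin 6 → ℝ) : ℝ := (x 2)^2*(x 4)^2/(x 1*x 3*x 5)

end

noncomputable section

def eact : Fin 3 → ℝ → (Fin 6 → ℝ) → (Fin 6 → ℝ) := ![e0act, e1act, e2act]

end

open MvPolynomial in
/-- A function agrees on the positive orthant with a ratio of nonzero polynomials with
nonnegative coefficients. -/
def IsPositiveRational {σ : Type*} (f : (σ → ℝ) → ℝ) : Prop :=
  ∃ g h : MvPolynomial σ ℝ, g ≠ 0 ∧ h ≠ 0 ∧ (∀ d, 0 ≤ coeff d g) ∧ (∀ d, 0 ≤ coeff d h) ∧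
    ∀ y : σ → ℝ, (∀ k, 0 < y k) → f y = eval y g / eval y h

namespace MvPolynomial

variable {σ : Type*}

theorem eval_pos_of_coeff_nonneg {p : MvPolynomial σ ℝ} (hp : p ≠ 0)
    (hc : ∀ d, 0 ≤ coeff d p) {y : σ → ℝ} (hy : ∀ k, 0 < y k) : 0 < eval y p := by
  rw [eval_eq]
  refine Finset.sum_pos (fun d hd => ?_) (support_nonempty.2 hp)
  exact mul_pos ((hc d).lt_of_ne' (mem_support_iff.1 hd))
    (Finset.prod_pos fun k _ => pow_pos (hy k) _)

theorem coeff_mul_nonneg {p q : MvPolynomial σ ℝ} (hp : ∀ d, 0 ≤ coeff d p)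
    (hq : ∀ d, 0 ≤ coeff d q) (d : σ →₀ ℕ) : 0 ≤ coeff d (p * q) := by
  classical
  rw [coeff_mul]
  exact Finset.sum_nonneg fun e _ => mul_nonneg (hp _) (hq _)

theorem coeff_add_nonneg {p q : MvPolynomial σ ℝ} (hp : ∀ d, 0 ≤ coeff d p)
    (hq : ∀ d, 0 ≤ coeff d q) (d : σ →₀ ℕ) : 0 ≤ coeff d (p + q) := by
  rw [coeff_add]
  exact add_nonneg (hp d) (hq d)

theorem add_ne_zero_of_coeff_nonneg {p q : MvPolynomial σ ℝ} (hp0 : p ≠ 0) (hq0 : q ≠ 0)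
    (hp : ∀ d, 0 ≤ coeff d p) (hq : ∀ d, 0 ≤ coeff d q) : p + q ≠ 0 := by
  intro h
  have hpos := add_pos (eval_pos_of_coeff_nonneg hp0 hp (y := 1) fun _ => one_pos)
    (eval_pos_of_coeff_nonneg hq0 hq (y := 1) fun _ => one_pos)
  rw [← map_add, h, map_zero] at hpos
  exact hpos.false

theorem coeff_C_nonneg {r : ℝ} (hr : 0 ≤ r) (d : σ →₀ ℕ) :
    0 ≤ coeff d (C r : MvPolynomial σ ℝ) := by
  classical
  rw [coeff_C]
  split_ifs <;> simp [hr]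

theorem coeff_X_nonneg (k : σ) (d : σ →₀ ℕ) : 0 ≤ coeff d (X k : MvPolynomial σ ℝ) := by
  classical
  rw [coeff_X]
  split_ifs <;> simp

end MvPolynomial

namespace IsPositiveRational

open MvPolynomial

variable {σ : Type*} {f f' : (σ → ℝ) → ℝ}

theorem const {r : ℝ} (hr : 0 < r) : IsPositiveRational fun _ : σ → ℝ => r :=
  ⟨C r, C 1, by simpa using hr.ne', by simp, coeff_C_nonneg hr.le, coeff_C_nonneg zero_le_one,
    fun y _ => by simp⟩

theorem coord (k : σ) : IsPositiveRational fun y : σ → ℝ => y k :=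
  ⟨X k, C 1, X_ne_zero k, by simp, coeff_X_nonneg k, coeff_C_nonneg zero_le_one,
    fun y _ => by simp⟩

theorem add (hf : IsPositiveRational f) (hf' : IsPositiveRational f') :
    IsPositiveRational fun y => f y + f' y := by
  obtain ⟨g, h, hg0, hh0, hg, hh, hgh⟩ := hf
  obtain ⟨g', h', hg0', hh0', hg', hh', hgh'⟩ := hf'
  refine ⟨g * h' + h * g', h * h',
    add_ne_zero_of_coeff_nonneg (mul_ne_zero hg0 hh0') (mul_ne_zero hh0 hg0')
      (coeff_mul_nonneg hg hh') (coeff_mul_nonneg hh hg'),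
    mul_ne_zero hh0 hh0', coeff_add_nonneg (coeff_mul_nonneg hg hh') (coeff_mul_nonneg hh hg'),
    coeff_mul_nonneg hh hh', fun y hy => ?_⟩
  simp only [hgh y hy, hgh' y hy, map_add, map_mul]
  exact div_add_div _ _ (eval_pos_of_coeff_nonneg hh0 hh hy).ne'
    (eval_pos_of_coeff_nonneg hh0' hh' hy).ne'

theorem mul (hf : IsPositiveRational f) (hf' : IsPositiveRational f') :
    IsPositiveRational fun y => f y * f' y := by
  obtain ⟨g, h, hg0, hh0, hg, hh, hgh⟩ := hf
  obtain ⟨g', h', hg0', hh0', hg', hh', hgh'⟩ := hf'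
  refine ⟨g * g', h * h', mul_ne_zero hg0 hg0', mul_ne_zero hh0 hh0', coeff_mul_nonneg hg hg',
    coeff_mul_nonneg hh hh', fun y hy => ?_⟩
  simp only [hgh y hy, hgh' y hy, map_mul, div_mul_div_comm]

theorem inv (hf : IsPositiveRational f) : IsPositiveRational fun y => (f y)⁻¹ := by
  obtain ⟨g, h, hg0, hh0, hg, hh, hgh⟩ := hf
  exact ⟨h, g, hh0, hg0, hh, hg, fun y hy => by simp only [hgh y hy, inv_div]⟩

theorem div (hf : IsPositiveRational f) (hf' : IsPositiveRational f') :
    IsPositiveRational fun y => f y / f' y := by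
  simpa only [div_eq_mul_inv] using hf.mul hf'.inv

theorem pow (hf : IsPositiveRational f) (n : ℕ) : IsPositiveRational fun y => f y ^ n := by
  induction n with
  | zero => simpa using const one_pos
  | succ n ih => simpa only [pow_succ] using ih.mul hf

theorem vecEmpty (j : Fin 0) : IsPositiveRational fun _ : σ → ℝ => (![] : Fin 0 → ℝ) j :=
  j.elim0

theorem vecCons {n : ℕ} {v : (σ → ℝ) → Fin n → ℝ} (hf : IsPositiveRational f)
    (hv : ∀ j, IsPositiveRational fun y => v y j) (j : Fin (n + 1)) :
    IsPositiveRational fun y => Matrix.vecCons (f y) (v y) j :=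
  Fin.cases hf hv j

end IsPositiveRational

theorem isPositiveRational_e0act : ∀ j : Fin 6,
    IsPositiveRational fun y : Fin 7 → ℝ => e0act (y 0) (fun k => y k.succ) j := by
  dsimp only [e0act]
  refine .vecCons ?_ (.vecCons ?_ (.vecCons ?_ (.vecCons ?_ (.vecCons ?_ (.vecCons ?_ .vecEmpty)))))
  all_goals
    repeat' first
      | exact .coord _
      | exact .const (by norm_num)
      | with_reducible apply IsPositiveRational.pow
      | with_reducible apply IsPositiveRational.add
      | with_reducible apply IsPositiveRational.mul
      | with_reducible apply IsPositiveRational.div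

theorem isPositiveRational_e1act : ∀ j : Fin 6,
    IsPositiveRational fun y : Fin 7 → ℝ => e1act (y 0) (fun k => y k.succ) j := by
  dsimp only [e1act]
  refine .vecCons ?_ (.vecCons ?_ (.vecCons ?_ (.vecCons ?_ (.vecCons ?_ (.vecCons ?_ .vecEmpty)))))
  all_goals
    repeat' first
      | exact .coord _
      | exact .const (by norm_num)
      | with_reducible apply IsPositiveRational.pow
      | with_reducible apply IsPositiveRational.add
      | with_reducible apply IsPositiveRational.mul
      | with_reducible apply IsPositiveRational.div

theorem isPositiveRational_e2act : ∀ j : Fin 6,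
    IsPositiveRational fun y : Fin 7 → ℝ => e2act (y 0) (fun k => y k.succ) j := by
  dsimp only [e2act]
  refine .vecCons ?_ (.vecCons ?_ (.vecCons ?_ (.vecCons ?_ (.vecCons ?_ (.vecCons ?_ .vecEmpty)))))
  all_goals
    repeat' first
      | exact .coord _
      | exact .const (by norm_num)
      | with_reducible apply IsPositiveRational.pow
      | with_reducible apply IsPositiveRational.add
      | with_reducible apply IsPositiveRational.mul
      | with_reducible apply IsPositiveRational.div

theorem isPositiveRational_eact (i : Fin 3) (j : Fin 6) :
    IsPositiveRational fun y : Fin 7 → ℝ => eact i (y 0) (fun k => y k.succ) j :=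
  match i with
  | 0 => isPositiveRational_e0act j
  | 1 => isPositiveRational_e1act j
  | 2 => isPositiveRational_e2act j

theorem isPositiveRational_eps_gamma {F : (Fin 6 → ℝ) → ℝ}
    (hF : F ∈ ({eps0, eps1, eps2, gamma0, gamma1, gamma2} : Set ((Fin 6 → ℝ) → ℝ))) :
    IsPositiveRational F := by
  rcases hF with rfl | rfl | rfl | rfl | rfl | rfl
  on_goal 1 => unfold eps0
  on_goal 2 => unfold eps1
  on_goal 3 => unfold eps2
  on_goal 4 => unfold gamma0
  on_goal 5 => unfold gamma1
  on_goal 6 => unfold gamma2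
  all_goals
    repeat' first
      | exact .coord _
      | exact .const (by norm_num)
      | with_reducible apply IsPositiveRational.pow
      | with_reducible apply IsPositiveRational.add
      | with_reducible apply IsPositiveRational.mul
      | with_reducible apply IsPositiveRational.div

/-- Positivity of the geometric crystal structure: every component of `e_i^c`, and the
functions `ε_i` and `γ_i`, are ratios of nonzero polynomials (in `c, x0,...,x5`, resp.
`x0,...,x5`) with nonnegative coefficients. -/
theorem geometric_crystal_positive :
    (∀ i : Fin 3, ∀ j : Fin 6, ∃ g h : MvPolynomial (Fin 7) ℝ, g ≠ 0 ∧ h ≠ 0 ∧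
      (∀ d, 0 ≤ MvPolynomial.coeff d g) ∧ (∀ d, 0 ≤ MvPolynomial.coeff d h) ∧
      ∀ c : ℝ, 0 < c → ∀ x : Fin 6 → ℝ, (∀ k, 0 < x k) →
        eact i c x j =
          MvPolynomial.eval (Fin.cons c x) g / MvPolynomial.eval (Fin.cons c x) h) ∧
    (∀ F ∈ ({eps0, eps1, eps2, gamma0, gamma1, gamma2} : Set ((Fin 6 → ℝ) → ℝ)),
      ∃ g h : MvPolynomial (Fin 6) ℝ, g ≠ 0 ∧ h ≠ 0 ∧
      (∀ d, 0 ≤ MvPolynomial.coeff d g) ∧ (∀ d, 0 ≤ MvPolynomial.coeff d h) ∧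
      ∀ x : Fin 6 → ℝ, (∀ k, 0 < x k) →
        F x = MvPolynomial.eval x g / MvPolynomial.eval x h) := by
  refine ⟨fun i j => ?_, fun F hF => isPositiveRational_eps_gamma hF⟩
  obtain ⟨g, h, hg0, hh0, hg, hh, hgh⟩ := isPositiveRational_eact i j
  refine ⟨g, h, hg0, hh0, hg, hh, fun c hc x hx => ?_⟩
  simpa only [Fin.cons_zero, Fin.cons_succ] using hgh (Fin.cons c x) (Fin.cases hc hx)
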